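/- Fix m ∈ (−1,1) and suppose Assumption 1 holds. Then G is continuous and twice differentiable and: (1) G(0) = G'(0) = 0; (2) G''(λ) > 0 for all λ ∈ ℝ; (3) {G'(λ) : λ ∈ (0,∞)} = (0, ς); (4) there exists a continuous strictly increasing function λ̂ : [0,ς) → [0,∞) with G'(λ̂(a)) = a for all a ∈ [0,ς), λ̂(0) = 0 and λ̂((0,ς)) = (0,∞); (5) for every a ∈ (0,ς), G*(a) = a·λ̂(a) − G(λ̂(a)) and the derivative of G* satisfies Ġ*(a) = λ̂(a); (6) G* is strictly increasing on [0,ς); (7) {G*(a) : a ∈ (0,ς)} = (0,γ); (8) there exists a continuous strictly increasing function â : (0,γ) → (0,ς) with G*(â(c)) = c for all c ∈ (0,γ). -/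

import Mathlib

open MeasureTheory Real Filter Set
open scoped ENNReal Topology BigOperators

noncomputable section

/-- Assumption 1 of the paper, phrased for the law `μ` of `h₁`. -/
structure Assumption1 (μ : Measure ℝ) : Prop where
  isProb : IsProbabilityMeasure μ
  acPart : ¬ μ.MutuallySingular (volume : Measure ℝ)
  smallBall : ∃ ε > (0:ℝ), ∃ p₁ > (0:ℝ), ∀ t ∈ Set.Ico (0:ℝ) ε,
    (μ {x : ℝ | |x| < t}).toReal ≤ p₁ * t
  densityLB : ∃ c d p₂ : ℝ, c < d ∧ 0 < p₂ ∧
    ∀ s : Set ℝ, s ⊆ Set.Icc c d → MeasurableSet s →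
      ENNReal.ofReal p₂ * volume s ≤ μ s
  intAbs : Integrable (fun x : ℝ => |x|) μ
  intSq : Integrable (fun x : ℝ => x ^ 2) μ
  intCube : Integrable (fun x : ℝ => |x| ^ 3) μ

/-- `g(λ) = log(((1+m)/2)e^{λ(1−m)} + ((1−m)/2)e^{−λ(1+m)})`. -/
def gfun (m lam : ℝ) : ℝ :=
  Real.log ((1 + m) / 2 * Real.exp (lam * (1 - m)) + (1 - m) / 2 * Real.exp (-(lam * (1 + m))))

/-- `G(λ) = E[g(λ h₁)]`. -/
def Gf (μ : Measure ℝ) (m lam : ℝ) : ℝ := ∫ x, gfun m (lam * x) ∂μ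

/-- `G*(a) = sup_{λ∈ℝ}(λa − G(λ))`. -/
def Gstar (μ : Measure ℝ) (m a : ℝ) : ℝ := ⨆ lam : ℝ, (lam * a - Gf μ m lam)

/-- `ς = −m ψ₁ + ψ₃`. -/
def sigmaBar (μ : Measure ℝ) (m : ℝ) : ℝ := -m * ∫ x, x ∂μ + ∫ x, |x| ∂μ

/-- `γ = −E[log(1 + sign(h₁)m)] + log 2`. -/
def gammaBar (μ : Measure ℝ) (m : ℝ) : ℝ :=
  -(∫ x, Real.log (1 + Real.sign x * m) ∂μ) + Real.log 2

/-!
Put `α = artanh m`. Then `g x = log cosh (x + α) - log cosh α - m x`, so `g' x = tanh (x + α) - m`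
and `g'' = 1 - tanh ^ 2 (· + α)`. Differentiating under the integral gives `G'` and `G'' > 0`, and
dominated convergence gives `G' λ → E[h (sign h - m)] = ς` as `λ → ∞`.

The quantity `x g' x - g x` is the relative entropy of the `± 1`-valued law with mean `tanh (x + α)`
with respect to the one with mean `m`, a continuous function of `tanh (x + α) ∈ [-1, 1]`. Hence
`G* (G' λ) = λ G' λ - G λ` tends to `γ`, the mean relative entropy of the point mass at `sign h`.
Everything else is Legendre duality for a function with continuous, strictly increasing derivative.
-/

section StrictMono

variable {α β : Type*}
  [ConditionallyCompleteLinearOrder α] [TopologicalSpace α] [OrderTopology α]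
  [DenselyOrdered α] [NoMaxOrder α]
  [LinearOrder β] [TopologicalSpace β] [OrderTopology β] {f : α → β} {a : α} {L : β}

lemma image_Ioi_eq_Ioo_of_tendsto (hmono : StrictMonoOn f (Ici a)) (hcont : ContinuousOn f (Ici a))
    (hL : Tendsto f atTop (𝓝 L)) : f '' Ioi a = Ioo (f a) L := by
  have lt_limit : ∀ x ∈ Ici a, f x < L := by
    intro x hx
    obtain ⟨y, hxy⟩ := exists_gt x
    have hy : y ∈ Ici a := le_trans hx hxy.le
    refine (hmono hx hy hxy).trans_le (ge_of_tendsto hL ?_)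
    filter_upwards [eventually_ge_atTop y] with z hyz
    exact hmono.monotoneOn hy (le_trans hy hyz) hyz
  refine Subset.antisymm ?_ fun b hb => ?_
  · rintro _ ⟨x, hx, rfl⟩
    exact ⟨hmono self_mem_Ici (le_of_lt hx) hx, lt_limit x (le_of_lt hx)⟩
  · obtain ⟨y, hby, hay⟩ :=
      ((hL.eventually (lt_mem_nhds hb.2)).and (eventually_ge_atTop a)).exists
    obtain ⟨x, hx, hxb⟩ :=
      intermediate_value_Ioo hay (hcont.mono Icc_subset_Ici_self) ⟨hb.1, hby⟩
    exact ⟨x, hx.1, hxb⟩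

lemma image_Ici_eq_Ico_of_tendsto (hmono : StrictMonoOn f (Ici a)) (hcont : ContinuousOn f (Ici a))
    (hL : Tendsto f atTop (𝓝 L)) : f '' Ici a = Ico (f a) L := by
  have himage := image_Ioi_eq_Ioo_of_tendsto hmono hcont hL
  obtain ⟨y, hay⟩ := exists_gt a
  obtain ⟨hfa, hfL⟩ : f y ∈ Ioo (f a) L := himage ▸ mem_image_of_mem f hay
  rw [← Ioi_insert, image_insert_eq, himage, Ioo_insert_left (hfa.trans hfL)]

end StrictMono

lemma exists_continuousOn_strictMonoOn_leftInvOn {α β : Type*}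
    [LinearOrder α] [TopologicalSpace α] [OrderTopology α] [Nonempty α]
    [LinearOrder β] [TopologicalSpace β] [OrderTopology β] {f : α → β} {s : Set α} {t : Set β}
    [OrdConnected s] [OrdConnected t] (hmono : StrictMonoOn f s) (himage : f '' s = t) :
    ∃ g : β → α, ContinuousOn g t ∧ StrictMonoOn g t ∧ LeftInvOn g f s := by
  subst himage
  set e : s ≃o f '' s := hmono.orderIso f s
  have hinv : LeftInvOn (Function.invFunOn f s) f s := hmono.injOn.leftInvOn_invFunOn
  refine ⟨Function.invFunOn f s, ?_, ?_, hinv⟩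
  · have hrestrict : (f '' s).domRestrict (Function.invFunOn f s) = Subtype.val ∘ e.symm := by
      funext ⟨b, hb⟩
      obtain ⟨x, hx, rfl⟩ := hb
      have : e.symm ⟨f x, mem_image_of_mem f hx⟩ = ⟨x, hx⟩ := e.symm_apply_apply ⟨x, hx⟩
      simp only [domRestrict_apply, Function.comp_apply, this, hinv hx]
    rw [continuousOn_iff_continuous_domRestrict, hrestrict]
    exact continuous_subtype_val.comp e.symm.continuous
  · rintro _ ⟨x, hx, rfl⟩ _ ⟨y, hy, rfl⟩ hxy
    rw [hinv hx, hinv hy]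
    exact (hmono.lt_iff_lt hx hy).1 hxy

section Legendre

/-- The Legendre transform `a ↦ sup_x (x a - f x)` of `f : ℝ → ℝ`; it takes the junk value `0`
wherever the supremum is infinite. -/
def legendre (f : ℝ → ℝ) (a : ℝ) : ℝ := ⨆ x : ℝ, (x * a - f x)

variable {f : ℝ → ℝ} {σ : ℝ}

lemma add_deriv_mul_sub_le (hconv : ConvexOn ℝ univ f) (hf : Differentiable ℝ f) (x y : ℝ) :
    f x + deriv f x * (y - x) ≤ f y := by
  rcases lt_trichotomy x y with hxy | rfl | hxy
  · have := hconv.deriv_le_slope (mem_univ x) (mem_univ y) hxy (hf x)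
    rw [slope_def_field, le_div_iff₀ (sub_pos.2 hxy)] at this
    linarith
  · simp
  · have := hconv.slope_le_deriv (mem_univ y) (mem_univ x) hxy (hf x)
    rw [slope_def_field, div_le_iff₀ (sub_pos.2 hxy)] at this
    linarith

lemma isGreatest_legendre_deriv (hconv : ConvexOn ℝ univ f) (hf : Differentiable ℝ f) (x : ℝ) :
    IsGreatest (range fun y => y * deriv f x - f y) (x * deriv f x - f x) := by
  refine ⟨⟨x, rfl⟩, ?_⟩
  rintro _ ⟨y, rfl⟩
  linarith [add_deriv_mul_sub_le hconv hf x y]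

lemma legendre_deriv (hconv : ConvexOn ℝ univ f) (hf : Differentiable ℝ f) (x : ℝ) :
    legendre f (deriv f x) = x * deriv f x - f x :=
  (isGreatest_legendre_deriv hconv hf x).csSup_eq

lemma legendre_deriv_add_mul_le (hconv : ConvexOn ℝ univ f) (hf : Differentiable ℝ f) (x y : ℝ) :
    legendre f (deriv f x) + x * (deriv f y - deriv f x) ≤ legendre f (deriv f y) := by
  rw [legendre_deriv hconv hf, legendre_deriv hconv hf]
  linarith [add_deriv_mul_sub_le hconv hf y x]

-- The difference quotient of `legendre f` between `f' x` and `f' y` lies between `x` and `y`.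
lemma hasDerivAt_legendre_deriv (hf : Differentiable ℝ f) (hmono : StrictMono (deriv f))
    (hcont : Continuous (deriv f)) (x : ℝ) : HasDerivAt (legendre f) x (deriv f x) := by
  have hconv : ConvexOn ℝ univ f := hmono.monotone.convexOn_univ_of_deriv hf
  rw [hasDerivAt_iff_isLittleO, Asymptotics.isLittleO_iff]
  intro ε hε
  filter_upwards [Icc_mem_nhds (hmono (sub_lt_self x hε)) (hmono (lt_add_of_pos_right x hε))]
    with b hb
  obtain ⟨y, hy, rfl⟩ := intermediate_value_Icc (by linarith) hcont.continuousOn hb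
  have hlower := legendre_deriv_add_mul_le hconv hf x y
  have hupper := legendre_deriv_add_mul_le hconv hf y x
  have hyx : |y - x| ≤ ε := abs_le.2 ⟨by linarith [hy.1], by linarith [hy.2]⟩
  calc ‖legendre f (deriv f y) - legendre f (deriv f x) - (deriv f y - deriv f x) • x‖
      = legendre f (deriv f y) - legendre f (deriv f x) - (deriv f y - deriv f x) * x :=
        abs_of_nonneg (by rw [smul_eq_mul]; linarith)
    _ ≤ (y - x) * (deriv f y - deriv f x) := by linarith
    _ ≤ ε * ‖deriv f y - deriv f x‖ := by
        refine (le_abs_self _).trans ?_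
        rw [abs_mul]
        exact mul_le_mul_of_nonneg_right hyx (abs_nonneg _)

lemma strictMonoOn_legendre (hf : Differentiable ℝ f) (hmono : StrictMono (deriv f))
    (hcont : Continuous (deriv f)) (hσ : Tendsto (deriv f) atTop (𝓝 σ)) :
    StrictMonoOn (legendre f) (Ico (deriv f 0) σ) := by
  refine strictMonoOn_of_deriv_pos (convex_Ico _ _) ?_ ?_
  · rw [← image_Ici_eq_Ico_of_tendsto (hmono.strictMonoOn _) hcont.continuousOn hσ]
    rintro _ ⟨x, -, rfl⟩
    exact (hasDerivAt_legendre_deriv hf hmono hcont x).continuousAt.continuousWithinAt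
  · rw [interior_Ico, ← image_Ioi_eq_Ioo_of_tendsto (hmono.strictMonoOn _) hcont.continuousOn hσ]
    rintro _ ⟨x, hx, rfl⟩
    rwa [(hasDerivAt_legendre_deriv hf hmono hcont x).deriv]

lemma image_legendre_Ioo {γ : ℝ} (hf : Differentiable ℝ f) (hmono : StrictMono (deriv f))
    (hcont : Continuous (deriv f)) (hσ : Tendsto (deriv f) atTop (𝓝 σ))
    (hγ : Tendsto (fun x => x * deriv f x - f x) atTop (𝓝 γ)) :
    legendre f '' Ioo (deriv f 0) σ = Ioo (-f 0) γ := by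
  have hlegendre : ∀ x, legendre f (deriv f x) = x * deriv f x - f x :=
    legendre_deriv (hmono.monotone.convexOn_univ_of_deriv hf) hf
  have himage := image_Ici_eq_Ico_of_tendsto (hmono.strictMonoOn (Ici 0)) hcont.continuousOn hσ
  have hmono_comp : StrictMonoOn (fun x => x * deriv f x - f x) (Ici 0) := by
    refine ((strictMonoOn_legendre hf hmono hcont hσ).comp (hmono.strictMonoOn _) ?_).congr
      fun x _ => hlegendre x
    exact himage ▸ mapsTo_image _ _
  have hcont_comp : Continuous fun x => x * deriv f x - f x := by
    have := hf.continuous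
    fun_prop
  rw [← image_Ioi_eq_Ioo_of_tendsto (hmono.strictMonoOn _) hcont.continuousOn hσ, image_image]
  simpa only [hlegendre, zero_mul, zero_sub] using
    image_Ioi_eq_Ioo_of_tendsto hmono_comp hcont_comp.continuousOn hγ

lemma exists_legendre_maximizer (hf : Differentiable ℝ f) (hmono : StrictMono (deriv f))
    (hcont : Continuous (deriv f)) (hσ : Tendsto (deriv f) atTop (𝓝 σ)) (x₀ : ℝ) :
    ∃ g : ℝ → ℝ, ContinuousOn g (Ico (deriv f x₀) σ) ∧ StrictMonoOn g (Ico (deriv f x₀) σ) ∧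
      (∀ a ∈ Ico (deriv f x₀) σ, x₀ ≤ g a ∧ deriv f (g a) = a) ∧
      g (deriv f x₀) = x₀ ∧ g '' Ioo (deriv f x₀) σ = Ioi x₀ ∧
      ∀ a ∈ Ioo (deriv f x₀) σ,
        legendre f a = a * g a - f (g a) ∧ deriv (legendre f) a = g a := by
  have himageIci := image_Ici_eq_Ico_of_tendsto (hmono.strictMonoOn (Ici x₀)) hcont.continuousOn hσ
  have himageIoi := image_Ioi_eq_Ioo_of_tendsto (hmono.strictMonoOn (Ici x₀)) hcont.continuousOn hσ
  obtain ⟨g, hg_cont, hg_mono, hg_inv⟩ :=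
    exists_continuousOn_strictMonoOn_leftInvOn (hmono.strictMonoOn (Ici x₀)) himageIci
  refine ⟨g, hg_cont, hg_mono, ?_, hg_inv self_mem_Ici, ?_, ?_⟩
  · rw [← himageIci]
    rintro _ ⟨x, hx, rfl⟩
    rw [hg_inv hx]
    exact ⟨hx, rfl⟩
  · rw [← himageIoi, (hg_inv.mono Ioi_subset_Ici_self).image_image]
  · rw [← himageIoi]
    rintro _ ⟨x, hx, rfl⟩
    rw [hg_inv (Ioi_subset_Ici_self hx), (hasDerivAt_legendre_deriv hf hmono hcont x).deriv,
      legendre_deriv (hmono.monotone.convexOn_univ_of_deriv hf) hf, mul_comm]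
    exact ⟨rfl, rfl⟩

end Legendre

section Hyperbolic

lemma tanh_eq_two_mul_sigmoid_sub_one (x : ℝ) : tanh x = 2 * sigmoid (2 * x) - 1 := by
  have hexp : exp (-(2 * x)) = exp (-x) / exp x := by rw [← exp_sub]; ring_nf
  have := exp_pos x
  have := exp_pos (-x)
  rw [tanh_eq, sigmoid_def, hexp]
  field_simp
  ring

lemma hasDerivAt_tanh (x : ℝ) : HasDerivAt tanh (1 - tanh x ^ 2) x := by
  rw [funext tanh_eq_two_mul_sigmoid_sub_one]
  have hsigmoid := (hasDerivAt_sigmoid (2 * x)).comp x ((hasDerivAt_id x).const_mul 2)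
  exact ((hsigmoid.const_mul 2).sub_const 1).congr_deriv (by ring)

lemma continuous_tanh : Continuous tanh :=
  continuous_iff_continuousAt.2 fun x => (hasDerivAt_tanh x).continuousAt

lemma tendsto_tanh_atTop : Tendsto tanh atTop (𝓝 1) := by
  rw [funext tanh_eq_two_mul_sigmoid_sub_one]
  have hlim := (tendsto_sigmoid_atTop.comp
    (tendsto_id.const_mul_atTop (two_pos : (0 : ℝ) < 2))).const_mul 2 |>.sub_const 1
  norm_num at hlim
  exact hlim

lemma tendsto_tanh_atBot : Tendsto tanh atBot (𝓝 (-1)) := by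
  simpa [Function.comp_def] using (tendsto_tanh_atTop.comp tendsto_neg_atBot_atTop).neg

lemma tendsto_tanh_mul_add_atTop {x : ℝ} (hx : x ≠ 0) (b : ℝ) :
    Tendsto (fun l => tanh (l * x + b)) atTop (𝓝 (Real.sign x)) := by
  rcases hx.lt_or_gt with hneg | hpos
  · rw [Real.sign_of_neg hneg]
    exact tendsto_tanh_atBot.comp
      (tendsto_atBot_add_const_right _ b (tendsto_id.atTop_mul_const_of_neg hneg))
  · rw [Real.sign_of_pos hpos]
    exact tendsto_tanh_atTop.comp
      (tendsto_atTop_add_const_right _ b (tendsto_id.atTop_mul_const hpos))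

lemma log_one_add_tanh_div_two (x : ℝ) : log ((1 + tanh x) / 2) = x - log (2 * cosh x) := by
  have : (1 + tanh x) / 2 = exp x / (2 * cosh x) := by
    rw [tanh_eq_sinh_div_cosh, ← cosh_add_sinh]
    field_simp
  rw [this, log_div (exp_ne_zero x) (by positivity), log_exp]

lemma log_one_sub_tanh_div_two (x : ℝ) : log ((1 - tanh x) / 2) = -x - log (2 * cosh x) := by
  simpa [tanh_neg, cosh_neg, ← sub_eq_add_neg] using log_one_add_tanh_div_two (-x)

end Hyperbolic

section SpinRelEntropy

/-- The relative entropy of the law on `{-1, 1}` with mean `t` with respect to the one with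
mean `m`. The entropy of the former is split off so that continuity up to `t = ± 1` is visible. -/
def spinRelEntropy (m t : ℝ) : ℝ :=
  -(1 + t) / 2 * log ((1 + m) / 2) - (1 - t) / 2 * log ((1 - m) / 2) - binEntropy ((1 + t) / 2)

lemma continuous_spinRelEntropy (m : ℝ) : Continuous (spinRelEntropy m) := by
  unfold spinRelEntropy
  fun_prop

lemma spinRelEntropy_sign {m x : ℝ} (hm : m ∈ Ioo (-1 : ℝ) 1) (hx : x ≠ 0) :
    spinRelEntropy m (Real.sign x) = log 2 - log (1 + Real.sign x * m) := by
  have hm_pos : 0 < 1 + m := by linarith [hm.1]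
  have hm_lt : 0 < 1 - m := by linarith [hm.2]
  rcases hx.lt_or_gt with hneg | hpos
  · simp [spinRelEntropy, Real.sign_of_neg hneg, log_div hm_lt.ne', ← sub_eq_add_neg]
  · simp [spinRelEntropy, Real.sign_of_pos hpos, log_div hm_pos.ne']

lemma spinRelEntropy_tanh (a b : ℝ) :
    spinRelEntropy (tanh a) (tanh b) = (b - a) * tanh b - (log (cosh b) - log (cosh a)) := by
  have hlog (x : ℝ) : log (2 * cosh x) = log 2 + log (cosh x) :=
    log_mul two_ne_zero (cosh_pos x).ne'
  have hcompl : 1 - (1 + tanh b) / 2 = (1 - tanh b) / 2 := by ring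
  rw [spinRelEntropy, binEntropy_eq_negMulLog_add_negMulLog_one_sub, hcompl, negMulLog, negMulLog]
  simp only [log_one_add_tanh_div_two, log_one_sub_tanh_div_two, hlog]
  ring

end SpinRelEntropy

section Gfun

variable {m : ℝ}

lemma gfun_zero (m : ℝ) : gfun m 0 = 0 := by
  simp [gfun, ← add_div]

lemma gfun_eq_log_cosh (hm : m ∈ Ioo (-1 : ℝ) 1) (x : ℝ) :
    gfun m x = log (cosh (x + artanh m)) - log (cosh (artanh m)) - m * x := by
  have hcosh := cosh_pos (artanh m)
  have hratio : cosh (x + artanh m) / cosh (artanh m) = cosh x + m * sinh x := by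
    nth_rewrite 3 [← tanh_artanh hm]
    rw [cosh_add, tanh_eq_sinh_div_cosh]
    field_simp
  have hpos : 0 < cosh x + m * sinh x := hratio ▸ div_pos (cosh_pos _) hcosh
  have hmgf : (1 + m) / 2 * exp (x * (1 - m)) + (1 - m) / 2 * exp (-(x * (1 + m))) =
      (cosh x + m * sinh x) * exp (-(m * x)) := by
    rw [show x * (1 - m) = x + -(m * x) by ring, show -(x * (1 + m)) = -x + -(m * x) by ring,
      exp_add, exp_add, cosh_eq, sinh_eq]
    ring
  rw [gfun, hmgf, log_mul hpos.ne' (exp_ne_zero _), log_exp, ← hratio,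
    log_div (cosh_pos _).ne' hcosh.ne']
  ring

lemma hasDerivAt_gfun (hm : m ∈ Ioo (-1 : ℝ) 1) (x : ℝ) :
    HasDerivAt (gfun m) (tanh (x + artanh m) - m) x := by
  rw [funext (gfun_eq_log_cosh hm), tanh_eq_sinh_div_cosh]
  have hlog := ((hasDerivAt_cosh _).comp_add_const x (artanh m)).log (cosh_pos _).ne'
  exact (hlog.sub_const _).sub (hasDerivAt_const_mul m)

lemma mul_deriv_sub_gfun (hm : m ∈ Ioo (-1 : ℝ) 1) (x : ℝ) :
    x * (tanh (x + artanh m) - m) - gfun m x = spinRelEntropy m (tanh (x + artanh m)) := by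
  have hentropy := spinRelEntropy_tanh (artanh m) (x + artanh m)
  rw [tanh_artanh hm] at hentropy
  rw [hentropy, gfun_eq_log_cosh hm]
  ring

end Gfun

section Dilation

variable {μ : Measure ℝ} {w φ φ' : ℝ → ℝ} {C : ℝ}

lemma integrable_mul_comp_mul (hw : Integrable w μ) (hwx : Integrable (fun x => w x * x) μ)
    (hφ : ∀ y, HasDerivAt φ (φ' y) y) (hC : ∀ y, |φ' y| ≤ C) (l : ℝ) :
    Integrable (fun x => w x * φ (l * x)) μ := by
  have hφ_cont : Continuous φ := continuous_iff_continuousAt.2 fun y => (hφ y).continuousAt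
  have hlip (y : ℝ) : |φ y| ≤ |φ 0| + C * |y| := by
    have := convex_univ.norm_image_sub_le_of_norm_hasDerivWithin_le
      (fun y _ => (hφ y).hasDerivWithinAt) (fun y _ => hC y) (mem_univ 0) (mem_univ y)
    rw [sub_zero, norm_eq_abs, norm_eq_abs] at this
    linarith [abs_sub_abs_le_abs_sub (φ y) (φ 0)]
  refine ((hw.norm.const_mul |φ 0|).add (hwx.norm.const_mul (C * |l|))).mono'
    (hw.aestronglyMeasurable.mul (by fun_prop)) (ae_of_all _ fun x => ?_)
  calc ‖w x * φ (l * x)‖ ≤ |w x| * (|φ 0| + C * |l * x|) := by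
        rw [norm_mul]
        exact mul_le_mul_of_nonneg_left (hlip _) (abs_nonneg _)
    _ = |φ 0| * ‖w x‖ + C * |l| * ‖w x * x‖ := by
        simp only [norm_eq_abs, abs_mul]
        ring

lemma hasDerivAt_integral_mul_comp_mul (hw : Integrable w μ)
    (hwx : Integrable (fun x => w x * x) μ)
    (hφ : ∀ y, HasDerivAt φ (φ' y) y) (hC : ∀ y, |φ' y| ≤ C) (l : ℝ) :
    HasDerivAt (fun l => ∫ x, w x * φ (l * x) ∂μ) (∫ x, w x * x * φ' (l * x) ∂μ) l := by
  have hφ'_meas : Measurable φ' := by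
    rw [← funext fun y => (hφ y).deriv]
    exact measurable_deriv φ
  have hint := integrable_mul_comp_mul hw hwx hφ hC
  refine (hasDerivAt_integral_of_dominated_loc_of_deriv_le
    (F' := fun l x => w x * x * φ' (l * x)) (bound := fun x => C * ‖w x * x‖) univ_mem
    (Eventually.of_forall fun l => (hint l).aestronglyMeasurable) (hint l)
    (hwx.aestronglyMeasurable.mul (hφ'_meas.comp (measurable_const_mul l)).aestronglyMeasurable)
    (ae_of_all _ fun x l _ => ?_) (hwx.norm.const_mul C)
    (ae_of_all _ fun x l _ => ?_)).2
  · rw [norm_mul, mul_comm]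
    exact mul_le_mul_of_nonneg_right (hC _) (norm_nonneg _)
  · exact (((hφ (l * x)).comp l (hasDerivAt_mul_const x)).const_mul (w x)).congr_deriv (by ring)

end Dilation

section Limit

variable {μ : Measure ℝ} {w F : ℝ → ℝ}

lemma tendsto_integral_mul_comp_tanh (hμ : μ {0} = 0) (hw : Integrable w μ) (hF : Continuous F)
    (b : ℝ) :
    Tendsto (fun l => ∫ x, w x * F (tanh (l * x + b)) ∂μ) atTop
      (𝓝 (∫ x, w x * F (Real.sign x) ∂μ)) := by
  obtain ⟨C, hC⟩ := (isCompact_Icc (a := (-1 : ℝ)) (b := 1)).exists_bound_of_continuousOn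
    hF.continuousOn
  have htanh (y : ℝ) : tanh y ∈ Icc (-1 : ℝ) 1 := ⟨(neg_one_lt_tanh y).le, (tanh_lt_one y).le⟩
  refine tendsto_integral_filter_of_dominated_convergence (fun x => C * ‖w x‖)
    (Eventually.of_forall fun l => hw.aestronglyMeasurable.mul ?_)
    (Eventually.of_forall fun l => ae_of_all _ fun x => ?_) (hw.norm.const_mul C) ?_
  · have := continuous_tanh
    exact Continuous.aestronglyMeasurable (by fun_prop)
  · rw [norm_mul, mul_comm]
    exact mul_le_mul_of_nonneg_right (hC _ (htanh _)) (norm_nonneg _)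
  · filter_upwards [compl_mem_ae_iff.2 hμ] with x hx
    exact ((hF.tendsto _).comp (tendsto_tanh_mul_add_atTop hx b)).const_mul (w x)

lemma integrable_comp_sign [IsFiniteMeasure μ] (hF : Measurable F) :
    Integrable (fun x => F (Real.sign x)) μ := by
  have hsign : Measurable Real.sign :=
    Measurable.ite measurableSet_Iio measurable_const
      (Measurable.ite measurableSet_Ioi measurable_const measurable_const)
  refine (integrable_const (max (max |F (-1)| |F 0|) |F 1|)).mono'
    (hF.comp hsign).aestronglyMeasurable (ae_of_all _ fun x => ?_)
  rcases Real.sign_apply_eq x with h | h | h <;> simp [h]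

end Limit

section Gf

variable {μ : Measure ℝ} [IsFiniteMeasure μ] {m : ℝ}

lemma integrable_id_of_integrable_sq (hsq : Integrable (fun x => x ^ 2) μ) :
    Integrable (fun x => x) μ :=
  ((memLp_two_iff_integrable_sq (f := fun x : ℝ => x) (by fun_prop)).2 hsq).integrable (by norm_num)

lemma Gf_zero (μ : Measure ℝ) (m : ℝ) : Gf μ m 0 = 0 := by
  simp [Gf, gfun_zero]

lemma abs_tanh_sub_le (hm : m ∈ Ioo (-1 : ℝ) 1) (y : ℝ) : |tanh y - m| ≤ 2 :=
  abs_le.2 ⟨by linarith [neg_one_lt_tanh y, hm.2], by linarith [tanh_lt_one y, hm.1]⟩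

lemma integrable_gfun_mul (hid : Integrable (fun x => x) μ) (hm : m ∈ Ioo (-1 : ℝ) 1) (l : ℝ) :
    Integrable (fun x => gfun m (l * x)) μ := by
  simpa using integrable_mul_comp_mul (w := fun _ => 1) (integrable_const 1) (by simpa using hid)
    (hasDerivAt_gfun hm) (fun y => abs_tanh_sub_le hm (y + artanh m)) l

lemma hasDerivAt_Gf (hid : Integrable (fun x => x) μ) (hm : m ∈ Ioo (-1 : ℝ) 1) (l : ℝ) :
    HasDerivAt (Gf μ m) (∫ x, x * (tanh (l * x + artanh m) - m) ∂μ) l := by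
  simpa [← Gf.eq_def] using hasDerivAt_integral_mul_comp_mul (w := fun _ => 1) (integrable_const 1)
    (by simpa using hid) (hasDerivAt_gfun hm) (fun y => abs_tanh_sub_le hm (y + artanh m)) l

lemma deriv_Gf (hid : Integrable (fun x => x) μ) (hm : m ∈ Ioo (-1 : ℝ) 1) :
    deriv (Gf μ m) = fun l => ∫ x, x * (tanh (l * x + artanh m) - m) ∂μ :=
  funext fun l => (hasDerivAt_Gf hid hm l).deriv

lemma deriv_Gf_zero (hid : Integrable (fun x => x) μ) (hm : m ∈ Ioo (-1 : ℝ) 1) :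
    deriv (Gf μ m) 0 = 0 := by
  simp [deriv_Gf hid hm, tanh_artanh hm]

lemma hasDerivAt_deriv_Gf (hsq : Integrable (fun x => x ^ 2) μ) (hm : m ∈ Ioo (-1 : ℝ) 1)
    (l : ℝ) :
    HasDerivAt (deriv (Gf μ m)) (∫ x, x ^ 2 * (1 - tanh (l * x + artanh m) ^ 2) ∂μ) l := by
  have hid := integrable_id_of_integrable_sq hsq
  have hderiv (y : ℝ) : HasDerivAt (fun y => tanh (y + artanh m) - m)
      (1 - tanh (y + artanh m) ^ 2) y :=
    ((hasDerivAt_tanh _).comp_add_const y (artanh m)).sub_const m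
  have hbound (y : ℝ) : |1 - tanh (y + artanh m) ^ 2| ≤ 1 :=
    abs_le.2 ⟨by linarith [tanh_sq_lt_one (y + artanh m)], sub_le_self _ (sq_nonneg _)⟩
  rw [deriv_Gf hid hm]
  simpa only [← sq] using
    hasDerivAt_integral_mul_comp_mul hid (by simpa only [← sq] using hsq) hderiv hbound l

lemma deriv_deriv_Gf_pos (hsq : Integrable (fun x => x ^ 2) μ) (hm : m ∈ Ioo (-1 : ℝ) 1)
    (hμ : μ {0}ᶜ ≠ 0) (l : ℝ) : 0 < deriv (deriv (Gf μ m)) l := by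
  have htanh (x : ℝ) : 0 < 1 - tanh (l * x + artanh m) ^ 2 := sub_pos.2 (tanh_sq_lt_one _)
  have hcont := continuous_tanh
  have hint : Integrable (fun x => x ^ 2 * (1 - tanh (l * x + artanh m) ^ 2)) μ := by
    refine hsq.mono' (by fun_prop) (ae_of_all _ fun x => ?_)
    rw [norm_of_nonneg (mul_nonneg (sq_nonneg x) (htanh x).le)]
    exact mul_le_of_le_one_right (sq_nonneg x) (sub_le_self _ (sq_nonneg _))
  have hsupport : Function.support (fun x => x ^ 2 * (1 - tanh (l * x + artanh m) ^ 2)) = {0}ᶜ := by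
    ext x
    simp [(htanh x).ne']
  rw [(hasDerivAt_deriv_Gf hsq hm l).deriv, integral_pos_iff_support_of_nonneg
    (fun x => mul_nonneg (sq_nonneg x) (htanh x).le) hint, hsupport]
  exact pos_iff_ne_zero.2 hμ

lemma sigmaBar_eq_integral_sign {μ : Measure ℝ} (hid : Integrable (fun x => x) μ) (m : ℝ) :
    sigmaBar μ m = ∫ x, x * (Real.sign x - m) ∂μ := by
  have hsign (x : ℝ) : x * (Real.sign x - m) = -m * x + |x| := by
    rcases lt_trichotomy x 0 with h | rfl | h
    · rw [Real.sign_of_neg h, abs_of_neg h]; ring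
    · simp
    · rw [Real.sign_of_pos h, abs_of_pos h]; ring
  simp only [hsign]
  rw [integral_add (hid.const_mul _) hid.abs, integral_const_mul, sigmaBar]

lemma tendsto_deriv_Gf_atTop (hid : Integrable (fun x => x) μ) (hm : m ∈ Ioo (-1 : ℝ) 1)
    (hμ : μ {0} = 0) : Tendsto (deriv (Gf μ m)) atTop (𝓝 (sigmaBar μ m)) := by
  rw [deriv_Gf hid hm, sigmaBar_eq_integral_sign hid]
  exact tendsto_integral_mul_comp_tanh hμ hid (continuous_id.sub continuous_const) _

lemma mul_deriv_sub_Gf (hid : Integrable (fun x => x) μ) (hm : m ∈ Ioo (-1 : ℝ) 1) (l : ℝ) :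
    l * deriv (Gf μ m) l - Gf μ m l =
      ∫ x, spinRelEntropy m (tanh (l * x + artanh m)) ∂μ := by
  have hint : Integrable (fun x => x * (tanh (l * x + artanh m) - m)) μ := by
    have := continuous_tanh
    refine (hid.norm.const_mul 2).mono' (by fun_prop) (ae_of_all _ fun x => ?_)
    rw [norm_mul, mul_comm]
    exact mul_le_mul_of_nonneg_right (abs_tanh_sub_le hm _) (norm_nonneg x)
  rw [deriv_Gf hid hm, Gf, ← integral_const_mul,
    ← integral_sub (hint.const_mul l) (integrable_gfun_mul hid hm l)]
  simp only [← mul_deriv_sub_gfun hm, mul_assoc]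

lemma gammaBar_eq_integral_spinRelEntropy_sign {μ : Measure ℝ} [IsProbabilityMeasure μ]
    (hm : m ∈ Ioo (-1 : ℝ) 1) (hμ : μ {0} = 0) :
    gammaBar μ m = ∫ x, spinRelEntropy m (Real.sign x) ∂μ := by
  have hae : ∀ᵐ x ∂μ, spinRelEntropy m (Real.sign x) = log 2 - log (1 + Real.sign x * m) := by
    filter_upwards [compl_mem_ae_iff.2 hμ] with x hx using spinRelEntropy_sign hm hx
  have hint : Integrable (fun x => log (1 + Real.sign x * m)) μ :=
    integrable_comp_sign (F := fun t => log (1 + t * m)) (by fun_prop)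
  rw [integral_congr_ae hae, integral_sub (integrable_const _) hint, integral_const, gammaBar]
  simp [neg_add_eq_sub]

lemma tendsto_mul_deriv_sub_Gf_atTop {μ : Measure ℝ} [IsProbabilityMeasure μ]
    (hid : Integrable (fun x => x) μ) (hm : m ∈ Ioo (-1 : ℝ) 1) (hμ : μ {0} = 0) :
    Tendsto (fun l => l * deriv (Gf μ m) l - Gf μ m l) atTop (𝓝 (gammaBar μ m)) := by
  simp only [mul_deriv_sub_Gf hid hm, gammaBar_eq_integral_spinRelEntropy_sign hm hμ]
  simpa using tendsto_integral_mul_comp_tanh (w := fun _ => 1) hμ (integrable_const 1)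
    (continuous_spinRelEntropy m) (artanh m)

end Gf

lemma Assumption1.measure_singleton_zero {μ : Measure ℝ} (h : Assumption1 μ) : μ {0} = 0 := by
  have := h.isProb
  obtain ⟨ε, hε, p, -, hball⟩ := h.smallBall
  have hlim : Tendsto (fun t : ℝ => p * t) (𝓝[>] 0) (𝓝 0) :=
    ((continuous_const_mul p).tendsto' 0 0 (mul_zero p)).mono_left nhdsWithin_le_nhds
  have hle : μ.real {0} ≤ 0 := by
    refine ge_of_tendsto hlim ?_
    filter_upwards [Ioo_mem_nhdsGT hε] with t ht
    refine (measureReal_mono ?_).trans (hball t ⟨ht.1.le, ht.2⟩)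
    simpa using ht.1
  exact (measureReal_eq_zero_iff).1 (hle.antisymm measureReal_nonneg)

theorem stmt17_general (μ : Measure ℝ) [IsProbabilityMeasure μ] (hμ : μ {0} = 0)
    (hsq : Integrable (fun x => x ^ 2) μ) (m : ℝ) (hm : m ∈ Ioo (-1 : ℝ) 1) :
    (Continuous (Gf μ m) ∧ Differentiable ℝ (Gf μ m) ∧ Differentiable ℝ (deriv (Gf μ m))) ∧
    (Gf μ m 0 = 0 ∧ deriv (Gf μ m) 0 = 0) ∧
    (∀ lam : ℝ, 0 < deriv (deriv (Gf μ m)) lam) ∧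
    deriv (Gf μ m) '' Ioi 0 = Ioo 0 (sigmaBar μ m) ∧
    (∃ lamHat : ℝ → ℝ,
      ContinuousOn lamHat (Ico 0 (sigmaBar μ m)) ∧
      StrictMonoOn lamHat (Ico 0 (sigmaBar μ m)) ∧
      (∀ a ∈ Ico 0 (sigmaBar μ m), 0 ≤ lamHat a ∧ deriv (Gf μ m) (lamHat a) = a) ∧
      lamHat 0 = 0 ∧ lamHat '' Ioo 0 (sigmaBar μ m) = Ioi 0 ∧
      (∀ a ∈ Ioo 0 (sigmaBar μ m),
        Gstar μ m a = a * lamHat a - Gf μ m (lamHat a) ∧ deriv (Gstar μ m) a = lamHat a)) ∧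
    StrictMonoOn (Gstar μ m) (Ico 0 (sigmaBar μ m)) ∧
    Gstar μ m '' Ioo 0 (sigmaBar μ m) = Ioo 0 (gammaBar μ m) ∧
    (∃ aHat : ℝ → ℝ,
      ContinuousOn aHat (Ioo 0 (gammaBar μ m)) ∧
      StrictMonoOn aHat (Ioo 0 (gammaBar μ m)) ∧
      ∀ c ∈ Ioo 0 (gammaBar μ m), aHat c ∈ Ioo 0 (sigmaBar μ m) ∧ Gstar μ m (aHat c) = c) := by
  have hid := integrable_id_of_integrable_sq hsq
  have hf : Differentiable ℝ (Gf μ m) := fun l => (hasDerivAt_Gf hid hm l).differentiableAt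
  have hf' : Differentiable ℝ (deriv (Gf μ m)) :=
    fun l => (hasDerivAt_deriv_Gf hsq hm l).differentiableAt
  have hpos := deriv_deriv_Gf_pos hsq hm (by simp [hμ])
  have hmono : StrictMono (deriv (Gf μ m)) := strictMono_of_deriv_pos hpos
  have hzero := deriv_Gf_zero hid hm
  have hσ := tendsto_deriv_Gf_atTop hid hm hμ
  have himage := image_Ioi_eq_Ioo_of_tendsto (hmono.strictMonoOn (Ici 0))
    hf'.continuous.continuousOn hσ
  have hmaximizer := exists_legendre_maximizer hf hmono hf'.continuous hσ 0
  have hstar_mono := strictMonoOn_legendre hf hmono hf'.continuous hσ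
  have hstar_image := image_legendre_Ioo hf hmono hf'.continuous hσ
    (tendsto_mul_deriv_sub_Gf_atTop hid hm hμ)
  rw [hzero] at himage hmaximizer hstar_mono hstar_image
  rw [Gf_zero, neg_zero] at hstar_image
  obtain ⟨aHat, haHat_cont, haHat_mono, haHat_inv⟩ :=
    exists_continuousOn_strictMonoOn_leftInvOn (hstar_mono.mono Ioo_subset_Ico_self) hstar_image
  refine ⟨⟨hf.continuous, hf, hf'⟩, ⟨Gf_zero μ m, hzero⟩, hpos, himage, hmaximizer, hstar_mono,
    hstar_image, aHat, haHat_cont, haHat_mono, ?_⟩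
  rw [← hstar_image]
  rintro _ ⟨a, ha, rfl⟩
  rw [haHat_inv ha]
  exact ⟨ha, rfl⟩

/-- analytical properties of `G` and of its Fenchel–Legendre transform
`G*` under Assumption 1. -/
theorem stmt17 (μ : Measure ℝ) (hAss : Assumption1 μ) (m : ℝ)
    (hm : m ∈ Set.Ioo (-1 : ℝ) 1) :
    -- continuity and twice differentiability
    (Continuous (Gf μ m) ∧ Differentiable ℝ (Gf μ m) ∧
      Differentiable ℝ (deriv (Gf μ m))) ∧
    -- (1)
    (Gf μ m 0 = 0 ∧ deriv (Gf μ m) 0 = 0) ∧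
    -- (2)
    (∀ lam : ℝ, 0 < deriv (deriv (Gf μ m)) lam) ∧
    -- (3)
    deriv (Gf μ m) '' (Set.Ioi 0) = Set.Ioo 0 (sigmaBar μ m) ∧
    -- (4) and (5)
    (∃ lamHat : ℝ → ℝ,
      ContinuousOn lamHat (Set.Ico 0 (sigmaBar μ m)) ∧
      StrictMonoOn lamHat (Set.Ico 0 (sigmaBar μ m)) ∧
      (∀ a ∈ Set.Ico 0 (sigmaBar μ m),
        0 ≤ lamHat a ∧ deriv (Gf μ m) (lamHat a) = a) ∧
      lamHat 0 = 0 ∧ lamHat '' (Set.Ioo 0 (sigmaBar μ m)) = Set.Ioi 0 ∧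
      (∀ a ∈ Set.Ioo 0 (sigmaBar μ m),
        Gstar μ m a = a * lamHat a - Gf μ m (lamHat a) ∧
        deriv (Gstar μ m) a = lamHat a)) ∧
    -- (6)
    StrictMonoOn (Gstar μ m) (Set.Ico 0 (sigmaBar μ m)) ∧
    -- (7)
    Gstar μ m '' (Set.Ioo 0 (sigmaBar μ m)) = Set.Ioo 0 (gammaBar μ m) ∧
    -- (8)
    (∃ aHat : ℝ → ℝ,
      ContinuousOn aHat (Set.Ioo 0 (gammaBar μ m)) ∧
      StrictMonoOn aHat (Set.Ioo 0 (gammaBar μ m)) ∧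
      ∀ c ∈ Set.Ioo 0 (gammaBar μ m),
        aHat c ∈ Set.Ioo 0 (sigmaBar μ m) ∧ Gstar μ m (aHat c) = c) := by
  have := hAss.isProb
  exact stmt17_general μ hAss.measure_singleton_zero hAss.intSq m hm
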